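/- Let W be a 3 × 3 real symmetric matrix with trace W = 0. Then 3√6 · det W ≤ ‖W‖_F³, where ‖W‖_F = √(trace(Wᵀ W)) is the Frobenius norm. -/

import Mathlib

open Matrix

/-- The trace of the square of a real symmetric matrix is the sum of the squared eigenvalues. -/
theorem trace_sq_eq_aux (W : Matrix (Fin 3) (Fin 3) ℝ) (hW : W.IsHermitian) :
    (W * W).trace = ∑ i, hW.eigenvalues i ^ 2 := by
  have h := hW.spectral_theorem
  have h2 : W * W = Unitary.conjStarAlgAut ℝ _ hW.eigenvectorUnitary
      (diagonal (RCLike.ofReal ∘ hW.eigenvalues) * diagonal (RCLike.ofReal ∘ hW.eigenvalues)) := by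
    rw [map_mul, ← h]
  rw [h2, Unitary.conjStarAlgAut_apply, Matrix.trace_mul_cycle]
  simp [Matrix.trace, diagonal_mul_diagonal, pow_two]

/-- Sharp determinant inequality for a trace-free 3×3 real symmetric matrix:
`3√6 · det W ≤ ‖W‖_F³`, where `‖W‖_F = √(trace (Wᵀ W))` is the Frobenius norm. -/
theorem det_le_frobenius_cubed
    (W : Matrix (Fin 3) (Fin 3) ℝ) (hW : W.IsHermitian) (htr : W.trace = 0) :
    3 * Real.sqrt 6 * W.det ≤ Real.sqrt ((Wᵀ * W).trace) ^ 3 := by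
  have hT : Wᵀ = W := by
    have := hW.eq
    rwa [conjTranspose_eq_transpose_of_trivial] at this
  have h1 := trace_sq_eq_aux W hW
  have h2 := hW.trace_eq_sum_eigenvalues
  have h3 := hW.det_eq_prod_eigenvalues
  rw [htr] at h2
  rw [hT, h1, h3]
  simp only [Fin.sum_univ_three, Fin.prod_univ_three, RCLike.ofReal_real_eq_id, id] at h2 ⊢
  generalize hW.eigenvalues 0 = a at *
  generalize hW.eigenvalues 1 = b at *
  generalize hW.eigenvalues 2 = c at *
  have hc : c = -a - b := by linarith
  have hs : 0 ≤ a ^ 2 + b ^ 2 + c ^ 2 := by positivity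
  refine le_of_sq_le_sq ?_ (by positivity)
  have e1 : (Real.sqrt (a ^ 2 + b ^ 2 + c ^ 2) ^ 3) ^ 2 = (a ^ 2 + b ^ 2 + c ^ 2) ^ 3 := by
    rw [← pow_mul, mul_comm, pow_mul, Real.sq_sqrt hs]
  have e2 : (3 * Real.sqrt 6 * (a * b * c)) ^ 2 = 54 * (a * b * c) ^ 2 := by
    rw [mul_pow, mul_pow, Real.sq_sqrt (by norm_num)]
    ring
  rw [e1, e2, hc]
  linarith [sq_nonneg ((a - b) * (a + 2 * b) * (2 * a + b)),
    show (a ^ 2 + b ^ 2 + (-a - b) ^ 2) ^ 3 - 54 * (a * b * (-a - b)) ^ 2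
      = 2 * ((a - b) * (a + 2 * b) * (2 * a + b)) ^ 2 by ring]
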